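/- Let G be a C₄-free graph of maximum degree at most d (d ≥ 3), and let M be an induced matching of G that is maximal and stable under the local-search exchange operation (for every e ∈ M, any two edges in PC_G(M, e) conflict with each other). Then |M| ≥ m(G) / max{d² + d/2, (9/8)d²}. -/

import Mathlib

open Classical

variable {V : Type*}

/-- Two edges (as `Sym2 V`) are in conflict: they are at distance at most 2
in the line graph, i.e. they share a vertex or some edge of `G` joins them. -/
def Conflict (G : SimpleGraph V) (e f : Sym2 V) : Prop :=
  ∃ a ∈ e, ∃ b ∈ f, a = b ∨ G.Adj a b

/-- `C_G(e)`: the set of edges of `G` in conflict with `e` (including `e`). -/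
def CSet (G : SimpleGraph V) (e : Sym2 V) : Set (Sym2 V) :=
  {f | f ∈ G.edgeSet ∧ Conflict G e f}

/-- `PC_G(M, e)`: the private conflict edges of `e` with respect to `M`. -/
def PCSet (G : SimpleGraph V) (M : Set (Sym2 V)) (e : Sym2 V) : Set (Sym2 V) :=
  CSet G e \ ⋃ f ∈ M \ {e}, CSet G f

/-- `M` is an induced matching of `G`. -/
def IsInducedMatching (G : SimpleGraph V) (M : Set (Sym2 V)) : Prop :=
  M ⊆ G.edgeSet ∧ ∀ e ∈ M, ∀ f ∈ M, e ≠ f → ¬ Conflict G e f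

/-- `M` is a maximal induced matching of `G`. -/
def IsMaximalInducedMatching (G : SimpleGraph V) (M : Set (Sym2 V)) : Prop :=
  IsInducedMatching G M ∧ ∀ M', IsInducedMatching G M' → M ⊆ M' → M' = M

/-- `M` is stable under the local-search exchange operation: any two distinct
private conflict edges of an edge of `M` conflict with each other. -/
def LSStable (G : SimpleGraph V) (M : Set (Sym2 V)) : Prop :=
  ∀ e ∈ M, ∀ e' ∈ PCSet G M e, ∀ e'' ∈ PCSet G M e, e' ≠ e'' → e'' ∈ CSet G e'

/-- The edges of `G` with both endpoints in `S`. -/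
def edgesWithin (G : SimpleGraph V) (S : Set V) : Set (Sym2 V) :=
  {e | e ∈ G.edgeSet ∧ ∀ a ∈ e, a ∈ S}

/-- The edges of `G` with one endpoint in `S` and the other in `T`. -/
def edgesBetween (G : SimpleGraph V) (S T : Set V) : Set (Sym2 V) :=
  {e | e ∈ G.edgeSet ∧ ∃ a b : V, e = s(a, b) ∧ a ∈ S ∧ b ∈ T}

/-- `G` has no induced cycle of length 4. -/
def C4Free (G : SimpleGraph V) : Prop :=
  ¬ ∃ a b c d : V, G.Adj a b ∧ G.Adj b c ∧ G.Adj c d ∧ G.Adj d a ∧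
      ¬ G.Adj a c ∧ ¬ G.Adj b d ∧ a ≠ c ∧ b ≠ d

/-- `G` has no induced cycle of length 5. -/
def C5Free (G : SimpleGraph V) : Prop :=
  ¬ ∃ a b c d e : V, G.Adj a b ∧ G.Adj b c ∧ G.Adj c d ∧ G.Adj d e ∧ G.Adj e a ∧
      ¬ G.Adj a c ∧ ¬ G.Adj a d ∧ ¬ G.Adj b d ∧ ¬ G.Adj b e ∧ ¬ G.Adj c e ∧
      a ≠ c ∧ a ≠ d ∧ b ≠ d ∧ b ≠ e ∧ c ≠ e

/-- `G` has no induced `K_{1,3}` (claw). -/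
def ClawFree (G : SimpleGraph V) : Prop :=
  ¬ ∃ v a b c : V, G.Adj v a ∧ G.Adj v b ∧ G.Adj v c ∧
      ¬ G.Adj a b ∧ ¬ G.Adj a c ∧ ¬ G.Adj b c ∧ a ≠ b ∧ a ≠ c ∧ b ≠ c

open Finset

/-! For a maximal `M`, the private conflict edges of `e ∈ M` are exactly the edges within the set
`P` of vertices far from all other edges of `M`, and stability says that the subgraph induced on `P`
is `2K₂`-free. An edge lying in no private set conflicts with two edges of `M`, so
`2 |E(G)| ≤ ∑ e ∈ M, (|C(e)| + |PC(e)|)` and it remains to bound each summand.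

Let `N` be the neighbourhood of `e = uv`. Every edge counted by `C(e)` other than `e` meets `N`, and
the degree sum over `N` pays for these edges once more for each one inside `N`. This surplus covers
the private edges inside `N`, so only the private edges leaving `N` are an additional cost. Those
leaving at a common neighbour of `u` and `v` are paid for by the resulting drop in `|N|`. The others
leave at a neighbour of only one of `u` and `v`. By `C₄`- and `2K₂`-freeness, the neighbours of `u`
only that have a private neighbour far from `e` form a clique; if there are `k` of them, at most
`k (d - k) ≤ d² / 4` private edges go from them to far vertices. If neighbours of `u` only and
neighbours of `v` only both occur, fewer than `d` private edges leave on either side. Altogether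
`|C(e)| + |PC(e)| ≤ 2 d² + (d - 2)² / 4`.
-/

section Conflict

variable {G : SimpleGraph V} {e f : Sym2 V} {a b u v x y : V}

theorem conflict_self (G : SimpleGraph V) (e : Sym2 V) : Conflict G e e := by
  induction e with
  | _ a b => exact ⟨a, Sym2.mem_mk_left a b, a, Sym2.mem_mk_left a b, Or.inl rfl⟩

theorem Conflict.symm (h : Conflict G e f) : Conflict G f e := by
  obtain ⟨a, ha, b, hb, hab⟩ := h
  exact ⟨b, hb, a, ha, hab.imp Eq.symm G.adj_symm⟩

/-- The vertices at distance at least 2 from both ends of `e`. -/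
def farVertices (G : SimpleGraph V) (e : Sym2 V) : Set V :=
  {w | ∀ c ∈ e, c ≠ w ∧ ¬ G.Adj c w}

theorem mem_farVertices_mk :
    x ∈ farVertices G s(a, b) ↔ (a ≠ x ∧ ¬ G.Adj a x) ∧ b ≠ x ∧ ¬ G.Adj b x :=
  Sym2.ball

theorem not_conflict_iff : ¬ Conflict G e f ↔ ∀ w ∈ f, w ∈ farVertices G e := by
  simp only [Conflict, farVertices, Set.mem_ofPred_eq]
  grind

/-- The subgraph induced on `P` contains no two edges forming an induced matching, i.e. it is
`2K₂`-free. -/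
def TwoK₂FreeOn (G : SimpleGraph V) (P : Set V) : Prop :=
  ∀ e ∈ edgesWithin G P, ∀ f ∈ edgesWithin G P, Conflict G e f

theorem mk_mem_edgesWithin {P : Set V} :
    s(a, b) ∈ edgesWithin G P ↔ G.Adj a b ∧ a ∈ P ∧ b ∈ P :=
  and_congr G.mem_edgeSet Sym2.ball

theorem TwoK₂FreeOn.notMem_farVertices {P : Set V} (hP : TwoK₂FreeOn G P)
    (he : e ∈ edgesWithin G P) (hxy : s(x, y) ∈ edgesWithin G P) (hx : x ∈ farVertices G e) :
    y ∉ farVertices G e := fun hy =>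
  not_conflict_iff.2 (Sym2.ball.2 ⟨hx, hy⟩) (hP e he _ hxy)

theorem C4Free.adj_of_common_neighbors (hC4 : C4Free G) (hxy : x ≠ y) (hnxy : ¬ G.Adj x y)
    (hxa : G.Adj x a) (hxb : G.Adj x b) (hya : G.Adj y a) (hyb : G.Adj y b) (hab : a ≠ b) :
    G.Adj a b := by
  by_contra hnab
  exact hC4 ⟨x, a, y, b, hxa, hya.symm, hyb, hxb.symm, hnxy, hnab, hxy, hab⟩

theorem C4Free.adj_of_common_outer (hC4 : C4Free G) (hua : G.Adj u a) (hub : G.Adj u b)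
    (hax : G.Adj a x) (hbx : G.Adj b x) (hx : x ∈ farVertices G s(u, v)) (hab : a ≠ b) :
    G.Adj a b :=
  have hux := (mem_farVertices_mk.1 hx).1
  hC4.adj_of_common_neighbors hux.1 hux.2 hua hub hax.symm hbx.symm hab

end Conflict

section LocalSearch

variable {G : SimpleGraph V} {M : Set (Sym2 V)} {e f : Sym2 V}

/-- The vertices at distance at least 2 from every edge of `M` other than `e`. The private
conflict edges of `e` are the edges of the subgraph they induce; see
`IsMaximalInducedMatching.PCSet_eq_edgesWithin`. -/
def privateVertices (G : SimpleGraph V) (M : Set (Sym2 V)) (e : Sym2 V) : Set V :=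
  {w | ∀ e' ∈ M, e' ≠ e → w ∈ farVertices G e'}

theorem IsInducedMatching.mem_privateVertices (hM : IsInducedMatching G M) (he : e ∈ M) {w : V}
    (hw : w ∈ e) : w ∈ privateVertices G M e := fun e' he' hne =>
  not_conflict_iff.1 (hM.2 e' he' e he hne) w hw

theorem IsMaximalInducedMatching.exists_conflict (hM : IsMaximalInducedMatching G M)
    (hf : f ∈ G.edgeSet) : ∃ e ∈ M, Conflict G e f := by
  obtain ⟨⟨hMG, hMind⟩, hmax⟩ := hM
  by_contra! hfree
  have hinsert : IsInducedMatching G (insert f M) := by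
    refine ⟨Set.insert_subset hf hMG, ?_⟩
    rintro e (rfl | he) e' (rfl | he') hne
    · exact absurd rfl hne
    · exact fun h => hfree e' he' h.symm
    · exact hfree e he
    · exact hMind e he e' he' hne
  have hfM : f ∈ M := hmax _ hinsert (Set.subset_insert f M) ▸ Set.mem_insert f M
  exact hfree f hfM (conflict_self G f)

theorem mem_PCSet_iff : f ∈ PCSet G M e ↔
    f ∈ G.edgeSet ∧ Conflict G e f ∧ ∀ e' ∈ M, e' ≠ e → ¬ Conflict G e' f := by
  simp only [PCSet, CSet, Set.mem_sdiff, Set.mem_ofPred_eq, Set.mem_iUnion, Set.mem_singleton_iff]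
  grind

theorem IsMaximalInducedMatching.PCSet_eq_edgesWithin (hM : IsMaximalInducedMatching G M) :
    PCSet G M e = edgesWithin G (privateVertices G M e) := by
  ext f
  have hprivate : (∀ w ∈ f, w ∈ privateVertices G M e) ↔
      ∀ e' ∈ M, e' ≠ e → ¬ Conflict G e' f := by
    simp only [not_conflict_iff, privateVertices, Set.mem_ofPred_eq]
    grind
  rw [mem_PCSet_iff, ← hprivate]
  refine and_congr_right fun hf => and_iff_right_of_imp fun hfar => ?_
  obtain ⟨e', he', hconf⟩ := hM.exists_conflict hf
  have heq : e' = e := by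
    by_contra hne
    exact hprivate.1 hfar e' he' hne hconf
  exact heq ▸ hconf

theorem LSStable.twoK₂FreeOn_privateVertices (hstab : LSStable G M)
    (hM : IsMaximalInducedMatching G M) (he : e ∈ M) :
    TwoK₂FreeOn G (privateVertices G M e) := by
  intro f hf g hg
  rw [← hM.PCSet_eq_edgesWithin] at hf hg
  obtain rfl | hne := eq_or_ne f g
  · exact conflict_self G f
  · exact (hstab e he f hf g hg hne).2

theorem IsMaximalInducedMatching.two_mul_card_le_sum {M E : Finset (Sym2 V)}
    (hM : IsMaximalInducedMatching G M) (hE : (E : Set (Sym2 V)) = G.edgeSet) :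
    2 * #E ≤ ∑ e ∈ M, ((CSet G e).ncard + (PCSet G M e).ncard) := by
  have hncard : ∀ s : Set (Sym2 V), s ⊆ G.edgeSet → s.ncard = #{f ∈ E | f ∈ s} := by
    intro s hs
    have hsE : s = ↑({f ∈ E | f ∈ s} : Finset (Sym2 V)) := by
      rw [coe_filter, ← Set.inter_eq_right.2 (hs.trans hE.ge)]
      ext f
      simp
    conv_lhs => rw [hsE, Set.ncard_coe_finset]
  have hswap : ∀ r : Sym2 V → Set (Sym2 V),
      ∑ e ∈ M, #{f ∈ E | f ∈ r e} = ∑ f ∈ E, #{e ∈ M | f ∈ r e} := fun r =>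
    sum_card_bipartiteAbove_eq_sum_card_bipartiteBelow (fun e f => f ∈ r e)
  have htwice : ∀ f ∈ E, 2 ≤ #{e ∈ M | f ∈ CSet G e} + #{e ∈ M | f ∈ PCSet G M e} := by
    intro f hf
    have hfG : f ∈ G.edgeSet := hE ▸ mem_coe.2 hf
    obtain ⟨e, he, hconf⟩ := hM.exists_conflict hfG
    have heC : e ∈ ({e ∈ M | f ∈ CSet G e} : Finset (Sym2 V)) := mem_filter.2 ⟨he, hfG, hconf⟩
    by_cases hprivate : f ∈ PCSet G M e
    · exact Nat.add_le_add (card_pos.2 ⟨e, heC⟩) (card_pos.2 ⟨e, mem_filter.2 ⟨he, hprivate⟩⟩)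
    · rw [mem_PCSet_iff] at hprivate
      push Not at hprivate
      obtain ⟨e', he', hne, hconf'⟩ := hprivate hfG hconf
      exact le_add_right (one_lt_card.2 ⟨e', mem_filter.2 ⟨he', hfG, hconf'⟩, e, heC, hne⟩)
  calc 2 * #E = #E • 2 := mul_comm _ _
    _ ≤ ∑ f ∈ E, (#{e ∈ M | f ∈ CSet G e} + #{e ∈ M | f ∈ PCSet G M e}) :=
      card_nsmul_le_sum E _ 2 htwice
    _ = ∑ e ∈ M, (#{f ∈ E | f ∈ CSet G e} + #{f ∈ E | f ∈ PCSet G M e}) := by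
      rw [sum_add_distrib, sum_add_distrib, hswap, hswap]
    _ = ∑ e ∈ M, ((CSet G e).ncard + (PCSet G M e).ncard) :=
      sum_congr rfl fun e _ => by
        rw [hncard _ fun _ hf => hf.1, hncard _ fun _ hf => hf.1.1]

end LocalSearch

section ExclusiveNeighbors

variable {G : SimpleGraph V} [G.LocallyFinite] {P : Set V} {u v a b x y : V} {d : ℕ}

/-- The vertices of `P` adjacent to `u` but neither equal nor adjacent to `v`; for an edge `uv`
these are the vertices of `P` through which an edge can reach `uv` at `u` only. -/
noncomputable def exclusiveNeighbors (G : SimpleGraph V) [G.LocallyFinite] (P : Set V)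
    (u v : V) : Finset V :=
  {a ∈ G.neighborFinset u | a ∈ P ∧ v ≠ a ∧ ¬ G.Adj v a}

/-- The neighbours of `w` that lie in `P` and are at distance at least 2 from `e`. -/
noncomputable def outerNeighbors (G : SimpleGraph V) [G.LocallyFinite] (P : Set V)
    (e : Sym2 V) (w : V) : Finset V :=
  {x ∈ G.neighborFinset w | x ∈ P ∧ x ∈ farVertices G e}

theorem mem_exclusiveNeighbors :
    a ∈ exclusiveNeighbors G P u v ↔ G.Adj u a ∧ a ∈ P ∧ v ≠ a ∧ ¬ G.Adj v a := by
  simp [exclusiveNeighbors]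

theorem mem_outerNeighbors {e : Sym2 V} {w : V} :
    x ∈ outerNeighbors G P e w ↔ G.Adj w x ∧ x ∈ P ∧ x ∈ farVertices G e := by
  simp [outerNeighbors]

theorem card_exclusiveNeighbors_lt_degree (huv : G.Adj u v) :
    #(exclusiveNeighbors G P u v) < G.degree u := by
  refine card_lt_card ⟨filter_subset _ _, fun hsub => ?_⟩
  exact (mem_exclusiveNeighbors.1 (hsub ((G.mem_neighborFinset u v).2 huv))).2.2.1 rfl

theorem C4Free.not_adj_of_mem_exclusiveNeighbors (hC4 : C4Free G) (huv : G.Adj u v)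
    (ha : a ∈ exclusiveNeighbors G P u v) (hb : b ∈ exclusiveNeighbors G P v u) :
    ¬ G.Adj a b := by
  obtain ⟨hua, -, hva, hnva⟩ := mem_exclusiveNeighbors.1 ha
  obtain ⟨hvb, -, hub, hnub⟩ := mem_exclusiveNeighbors.1 hb
  exact fun hab => hnva (hC4.adj_of_common_neighbors hub hnub huv hua hvb.symm hab.symm hva)

theorem TwoK₂FreeOn.isClique_exclusiveNeighbors (hP : TwoK₂FreeOn G P) (hC4 : C4Free G)
    (huv : s(u, v) ∈ edgesWithin G P) :
    G.IsClique {a | a ∈ exclusiveNeighbors G P u v ∧ (outerNeighbors G P s(u, v) a).Nonempty} := by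
  rintro a ⟨ha, x, hx⟩ b ⟨hb, y, hy⟩ hab
  obtain ⟨hua, haP, -, -⟩ := mem_exclusiveNeighbors.1 ha
  obtain ⟨hub, hbP, -, -⟩ := mem_exclusiveNeighbors.1 hb
  obtain ⟨hax, hxP, hxfar⟩ := mem_outerNeighbors.1 hx
  obtain ⟨hby, hyP, hyfar⟩ := mem_outerNeighbors.1 hy
  have hnux := (mem_farVertices_mk.1 hxfar).1.2
  have hnuy := (mem_farVertices_mk.1 hyfar).1.2
  have hnxy : ¬ G.Adj x y := fun hxy =>
    hP.notMem_farVertices huv (mk_mem_edgesWithin.2 ⟨hxy, hxP, hyP⟩) hxfar hyfar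
  by_contra hnab
  have hnbx : ¬ G.Adj b x := fun hbx => hnab (hC4.adj_of_common_outer hua hub hax hbx hxfar hab)
  have hnay : ¬ G.Adj a y := fun hay => hnab (hC4.adj_of_common_outer hua hub hay hby hyfar hab)
  have hbfar : b ∈ farVertices G s(a, x) := mem_farVertices_mk.2
    ⟨⟨hab, hnab⟩, fun hxb => hnux (hxb ▸ hub), fun hxb => hnbx hxb.symm⟩
  have hyfar' : y ∈ farVertices G s(a, x) := mem_farVertices_mk.2
    ⟨⟨fun hay => hnuy (hay ▸ hua), hnay⟩, fun hxy => hnbx (hxy ▸ hby), hnxy⟩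
  exact hP.notMem_farVertices (mk_mem_edgesWithin.2 ⟨hax, haP, hxP⟩)
    (mk_mem_edgesWithin.2 ⟨hby, hbP, hyP⟩) hbfar hyfar'

theorem TwoK₂FreeOn.card_outerNeighbors_add_card_le (hP : TwoK₂FreeOn G P) (hC4 : C4Free G)
    (huv : s(u, v) ∈ edgesWithin G P) (ha : a ∈ exclusiveNeighbors G P u v)
    (hne : (outerNeighbors G P s(u, v) a).Nonempty) :
    #(outerNeighbors G P s(u, v) a) +
      #{b ∈ exclusiveNeighbors G P u v | (outerNeighbors G P s(u, v) b).Nonempty} ≤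
        G.degree a := by
  set K := {b ∈ exclusiveNeighbors G P u v | (outerNeighbors G P s(u, v) b).Nonempty}
  have hclique := hP.isClique_exclusiveNeighbors hC4 huv
  have haK : a ∈ K := mem_filter.2 ⟨ha, hne⟩
  have hadj : ∀ b ∈ K, G.Adj u b := fun b hb =>
    (mem_exclusiveNeighbors.1 (mem_filter.1 hb).1).1
  have huK : u ∉ K.erase a := fun h => (hadj u (mem_of_mem_erase h)).ne rfl
  have hdisj : Disjoint (outerNeighbors G P s(u, v) a) (insert u (K.erase a)) := by
    refine disjoint_left.2 fun y hy hyK => ?_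
    obtain ⟨⟨huy, hnuy⟩, -⟩ := mem_farVertices_mk.1 (mem_outerNeighbors.1 hy).2.2
    obtain rfl | hyK := mem_insert.1 hyK
    · exact huy rfl
    · exact hnuy (hadj y (mem_of_mem_erase hyK))
  have hsub : outerNeighbors G P s(u, v) a ∪ insert u (K.erase a) ⊆ G.neighborFinset a := by
    refine union_subset (filter_subset _ _) (insert_subset ?_ fun b hb => ?_)
    · exact (G.mem_neighborFinset a u).2 (hadj a haK).symm
    · exact (G.mem_neighborFinset a b).2 <| hclique (mem_filter.1 haK)
        (mem_filter.1 (mem_of_mem_erase hb)) (ne_of_mem_erase hb).symm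
  calc #(outerNeighbors G P s(u, v) a) + #K
      = #(outerNeighbors G P s(u, v) a ∪ insert u (K.erase a)) := by
        rw [card_union_of_disjoint hdisj, card_insert_of_notMem huK, card_erase_add_one haK]
    _ ≤ G.degree a := card_le_card hsub

theorem TwoK₂FreeOn.four_mul_sum_card_outerNeighbors_le (hP : TwoK₂FreeOn G P) (hC4 : C4Free G)
    (huv : s(u, v) ∈ edgesWithin G P) (hd : ∀ w, G.degree w ≤ d) :
    4 * ∑ a ∈ exclusiveNeighbors G P u v, #(outerNeighbors G P s(u, v) a) ≤ d ^ 2 := by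
  set K := {a ∈ exclusiveNeighbors G P u v | (outerNeighbors G P s(u, v) a).Nonempty}
  have hterm : ∀ a ∈ K, #(outerNeighbors G P s(u, v) a) ≤ d - #K := by
    intro a ha
    obtain ⟨ha, hne⟩ := mem_filter.1 ha
    exact Nat.le_sub_of_add_le
      ((hP.card_outerNeighbors_add_card_le hC4 huv ha hne).trans (hd a))
  have hsum : ∑ a ∈ exclusiveNeighbors G P u v, #(outerNeighbors G P s(u, v) a) ≤
      #K * (d - #K) := by
    calc ∑ a ∈ exclusiveNeighbors G P u v, #(outerNeighbors G P s(u, v) a)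
        = ∑ a ∈ K, #(outerNeighbors G P s(u, v) a) :=
          (sum_filter_of_ne fun a _ h => card_ne_zero.1 h).symm
      _ ≤ #K * (d - #K) := sum_le_card_nsmul K _ _ hterm
  obtain hKd | hdK := le_total #K d
  · calc _ ≤ 4 * #K * (d - #K) := by rw [mul_assoc]; exact Nat.mul_le_mul_left 4 hsum
      _ ≤ (#K + (d - #K)) ^ 2 := four_mul_le_sq_add _ _
      _ = d ^ 2 := by rw [Nat.add_sub_cancel' hKd]
  · rw [Nat.sub_eq_zero_of_le hdK, mul_zero] at hsum
    simp [Nat.le_zero.1 hsum]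

theorem C4Free.mem_farVertices_of_opposite (hC4 : C4Free G) (huv : G.Adj u v)
    (ha : a ∈ exclusiveNeighbors G P u v) (hb : b ∈ exclusiveNeighbors G P v u) :
    a ∈ farVertices G s(v, b) := by
  obtain ⟨-, -, hva, hnva⟩ := mem_exclusiveNeighbors.1 ha
  have hvb := (mem_exclusiveNeighbors.1 hb).1
  exact mem_farVertices_mk.2 ⟨⟨hva, hnva⟩, fun hba => hnva (hba ▸ hvb),
    fun hba => hC4.not_adj_of_mem_exclusiveNeighbors huv ha hb hba.symm⟩

theorem mk_mem_edgesWithin_of_mem_exclusiveNeighbors (hu : u ∈ P)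
    (ha : a ∈ exclusiveNeighbors G P u v) : s(u, a) ∈ edgesWithin G P :=
  have ha := mem_exclusiveNeighbors.1 ha
  mk_mem_edgesWithin.2 ⟨ha.1, hu, ha.2.1⟩

theorem TwoK₂FreeOn.mem_outerNeighbors_of_opposite (hP : TwoK₂FreeOn G P) (hC4 : C4Free G)
    (huv : s(u, v) ∈ edgesWithin G P) (ha : a ∈ exclusiveNeighbors G P u v)
    (hb : b ∈ exclusiveNeighbors G P v u) (hx : x ∈ outerNeighbors G P s(u, v) a) :
    x ∈ outerNeighbors G P s(u, v) b := by
  obtain ⟨huv, -, hv⟩ := mk_mem_edgesWithin.1 huv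
  have haP := (mem_exclusiveNeighbors.1 ha).2.1
  have hvb := (mem_exclusiveNeighbors.1 hb).1
  obtain ⟨hax, hxP, hxfar⟩ := mem_outerNeighbors.1 hx
  obtain ⟨hvx, hnvx⟩ := (mem_farVertices_mk.1 hxfar).2
  refine mem_outerNeighbors.2 ⟨?_, hxP, hxfar⟩
  by_contra hnbx
  have hxfar' : x ∈ farVertices G s(v, b) := mem_farVertices_mk.2
    ⟨⟨hvx, hnvx⟩, fun hbx => hnvx (hbx ▸ hvb), hnbx⟩
  exact hP.notMem_farVertices (mk_mem_edgesWithin_of_mem_exclusiveNeighbors hv hb)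
    (mk_mem_edgesWithin.2 ⟨hax, haP, hxP⟩) (hC4.mem_farVertices_of_opposite huv ha hb) hxfar'

theorem TwoK₂FreeOn.exclusiveNeighbors_eq_singleton (hP : TwoK₂FreeOn G P) (hC4 : C4Free G)
    (huv : s(u, v) ∈ edgesWithin G P) (ha : a ∈ exclusiveNeighbors G P u v)
    (hb : b ∈ exclusiveNeighbors G P v u) (hx : x ∈ outerNeighbors G P s(u, v) a) :
    exclusiveNeighbors G P u v = {a} := by
  refine eq_singleton_iff_unique_mem.2 ⟨ha, fun a' ha' => ?_⟩
  obtain ⟨hadj, -, hv⟩ := mk_mem_edgesWithin.1 huv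
  obtain ⟨hua, haP, -⟩ := mem_exclusiveNeighbors.1 ha
  obtain ⟨hua', haP', -⟩ := mem_exclusiveNeighbors.1 ha'
  have hxb := hP.mem_outerNeighbors_of_opposite hC4 huv ha hb hx
  have hxa' : x ∈ outerNeighbors G P s(u, v) a' := by
    rw [Sym2.eq_swap] at huv hxb ⊢
    exact hP.mem_outerNeighbors_of_opposite hC4 huv hb ha' hxb
  obtain ⟨hax, -, hxfar⟩ := mem_outerNeighbors.1 hx
  have hax' := (mem_outerNeighbors.1 hxa').1
  by_contra hne
  have haa' : G.Adj a' a := hC4.adj_of_common_outer hua' hua hax' hax hxfar hne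
  exact hP.notMem_farVertices (mk_mem_edgesWithin_of_mem_exclusiveNeighbors hv hb)
    (mk_mem_edgesWithin.2 ⟨haa', haP', haP⟩) (hC4.mem_farVertices_of_opposite hadj ha' hb)
    (hC4.mem_farVertices_of_opposite hadj ha hb)

theorem TwoK₂FreeOn.card_outerNeighbors_le_one (hP : TwoK₂FreeOn G P) (hC4 : C4Free G)
    (huv : s(u, v) ∈ edgesWithin G P) (ha : a ∈ exclusiveNeighbors G P u v)
    (hb : b ∈ exclusiveNeighbors G P v u) : #(outerNeighbors G P s(u, v) a) ≤ 1 := by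
  refine card_le_one.2 fun x hx y hy => ?_
  have hadj := (mk_mem_edgesWithin.1 huv).1
  obtain ⟨hax, hxP, hxfar⟩ := mem_outerNeighbors.1 hx
  obtain ⟨hay, hyP, hyfar⟩ := mem_outerNeighbors.1 hy
  have hbx := (mem_outerNeighbors.1 (hP.mem_outerNeighbors_of_opposite hC4 huv ha hb hx)).1
  have hby := (mem_outerNeighbors.1 (hP.mem_outerNeighbors_of_opposite hC4 huv ha hb hy)).1
  obtain ⟨-, hba, hnba⟩ := mem_farVertices_mk.1 (hC4.mem_farVertices_of_opposite hadj ha hb)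
  by_contra hxy
  have hadj_xy : G.Adj x y := hC4.adj_of_common_neighbors hba hnba hbx hby hax hay hxy
  exact hP.notMem_farVertices huv (mk_mem_edgesWithin.2 ⟨hadj_xy, hxP, hyP⟩) hxfar hyfar

/-- The number of edges joining an exclusive neighbour of `u` to `u` or to one of its outer
neighbours. If `u ∈ P`, these are the edges within `P` that leave the neighbourhood of the edge `uv`
at an exclusive neighbour of `u`. -/
noncomputable def exitCount (G : SimpleGraph V) [G.LocallyFinite] (P : Set V) (u v : V) : ℕ :=
  ∑ a ∈ exclusiveNeighbors G P u v, (1 + #(outerNeighbors G P s(u, v) a))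

theorem exitCount_eq : exitCount G P u v = #(exclusiveNeighbors G P u v) +
    ∑ a ∈ exclusiveNeighbors G P u v, #(outerNeighbors G P s(u, v) a) := by
  rw [exitCount, sum_add_distrib, card_eq_sum_ones]

theorem TwoK₂FreeOn.four_mul_exitCount_le (hP : TwoK₂FreeOn G P) (hC4 : C4Free G)
    (huv : s(u, v) ∈ edgesWithin G P) (hdeg : ∀ w, G.degree w ≤ d) :
    4 * exitCount G P u v + 4 ≤ d ^ 2 + 4 * d := by
  have hcard : #(exclusiveNeighbors G P u v) < d :=
    (card_exclusiveNeighbors_lt_degree huv.1).trans_le (hdeg u)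
  have houter := hP.four_mul_sum_card_outerNeighbors_le hC4 huv hdeg
  rw [exitCount_eq]
  lia

theorem TwoK₂FreeOn.exitCount_lt_of_opposite (hP : TwoK₂FreeOn G P) (hC4 : C4Free G)
    (huv : s(u, v) ∈ edgesWithin G P) (hd : 3 ≤ d) (hdeg : ∀ w, G.degree w ≤ d)
    (hb : b ∈ exclusiveNeighbors G P v u) : exitCount G P u v < d := by
  by_cases houter : ∃ a ∈ exclusiveNeighbors G P u v, (outerNeighbors G P s(u, v) a).Nonempty
  · obtain ⟨a, ha, x, hx⟩ := houter
    have hone := hP.card_outerNeighbors_le_one hC4 huv ha hb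
    rw [exitCount, hP.exclusiveNeighbors_eq_singleton hC4 huv ha hb hx, sum_singleton]
    lia
  · have hzero : ∑ a ∈ exclusiveNeighbors G P u v, #(outerNeighbors G P s(u, v) a) = 0 :=
      sum_eq_zero fun a ha => card_eq_zero.2 <| not_nonempty_iff_eq_empty.1 fun hne =>
        houter ⟨a, ha, hne⟩
    rw [exitCount_eq, hzero]
    exact (card_exclusiveNeighbors_lt_degree huv.1).trans_le (hdeg u)

theorem TwoK₂FreeOn.four_mul_exitCount_add_exitCount_le (hP : TwoK₂FreeOn G P) (hC4 : C4Free G)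
    (huv : s(u, v) ∈ edgesWithin G P) (hd : 3 ≤ d) (hdeg : ∀ w, G.degree w ≤ d) :
    4 * (exitCount G P u v + exitCount G P v u) + 4 ≤ d ^ 2 + 4 * d := by
  have hvu : s(v, u) ∈ edgesWithin G P := Sym2.eq_swap ▸ huv
  obtain hA | ⟨a, ha⟩ := (exclusiveNeighbors G P u v).eq_empty_or_nonempty
  · have hzero : exitCount G P u v = 0 := by rw [exitCount, hA, sum_empty]
    simpa only [hzero, zero_add] using hP.four_mul_exitCount_le hC4 hvu hdeg
  obtain hB | ⟨b, hb⟩ := (exclusiveNeighbors G P v u).eq_empty_or_nonempty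
  · have hzero : exitCount G P v u = 0 := by rw [exitCount, hB, sum_empty]
    simpa only [hzero, add_zero] using hP.four_mul_exitCount_le hC4 huv hdeg
  have hu := hP.exitCount_lt_of_opposite hC4 huv hd hdeg hb
  have hv := hP.exitCount_lt_of_opposite hC4 hvu hd hdeg ha
  nlinarith [four_mul_le_sq_add d 2]

end ExclusiveNeighbors

section EdgeCounting

variable {G : SimpleGraph V} [G.LocallyFinite] {S : Finset V} {P : Set V} {e : Sym2 V}

/-- The edges of `G` with at least one end in `S`. -/
noncomputable def edgesMeeting (G : SimpleGraph V) [G.LocallyFinite] (S : Finset V) :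
    Finset (Sym2 V) :=
  S.biUnion fun w => G.incidenceFinset w

theorem mem_edgesMeeting : e ∈ edgesMeeting G S ↔ e ∈ G.edgeSet ∧ ∃ w ∈ S, w ∈ e := by
  simp only [edgesMeeting, mem_biUnion, SimpleGraph.mem_incidenceFinset,
    SimpleGraph.incidenceSet, Set.mem_ofPred_eq]
  grind

theorem mk_mem_edgesMeeting {a b : V} :
    s(a, b) ∈ edgesMeeting G S ↔ G.Adj a b ∧ (a ∈ S ∨ b ∈ S) := by
  rw [mem_edgesMeeting, SimpleGraph.mem_edgeSet]
  simp only [Sym2.mem_iff]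
  grind

theorem card_edgesMeeting_add_card_inside_le :
    #(edgesMeeting G S) + #{e ∈ edgesMeeting G S | ∀ w ∈ e, w ∈ S} ≤ ∑ w ∈ S, G.degree w := by
  have hends : ∀ e ∈ edgesMeeting G S,
      1 + (if ∀ w ∈ e, w ∈ S then 1 else 0) ≤ #{w ∈ S | w ∈ e} := by
    intro e he
    split_ifs with hinside
    · induction e with
      | _ a b =>
      obtain ⟨haS, hbS⟩ := Sym2.ball.1 hinside
      exact one_lt_card.2 ⟨a, mem_filter.2 ⟨haS, Sym2.mem_mk_left a b⟩,
        b, mem_filter.2 ⟨hbS, Sym2.mem_mk_right a b⟩, (mk_mem_edgesMeeting.1 he).1.ne⟩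
    · obtain ⟨-, w, hwS, hwe⟩ := mem_edgesMeeting.1 he
      exact card_pos.2 ⟨w, mem_filter.2 ⟨hwS, hwe⟩⟩
  have hdegree : ∀ w ∈ S, #{e ∈ edgesMeeting G S | w ∈ e} = G.degree w := by
    intro w hw
    rw [← G.card_incidenceFinset_eq_degree]
    congr 1
    ext e
    simp only [mem_filter, mem_edgesMeeting, SimpleGraph.mem_incidenceFinset,
      SimpleGraph.incidenceSet, Set.mem_ofPred_eq]
    grind
  calc #(edgesMeeting G S) + #{e ∈ edgesMeeting G S | ∀ w ∈ e, w ∈ S}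
      = ∑ e ∈ edgesMeeting G S, (1 + if ∀ w ∈ e, w ∈ S then 1 else 0) := by
        rw [sum_add_distrib, card_eq_sum_ones, card_filter]
    _ ≤ ∑ e ∈ edgesMeeting G S, #{w ∈ S | w ∈ e} := sum_le_sum hends
    _ = ∑ w ∈ S, #{e ∈ edgesMeeting G S | w ∈ e} :=
        (sum_card_bipartiteAbove_eq_sum_card_bipartiteBelow fun w e => w ∈ e).symm
    _ = ∑ w ∈ S, G.degree w := sum_congr rfl hdegree

/-- The neighbours of `w` in `P \ S`. -/
noncomputable def exitNeighbors (G : SimpleGraph V) [G.LocallyFinite] (P : Set V)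
    (S : Finset V) (w : V) : Finset V :=
  {y ∈ G.neighborFinset w | y ∈ P ∧ y ∉ S}

theorem card_edgesMeeting_within_le :
    #{e ∈ edgesMeeting G S | ∀ w ∈ e, w ∈ P} ≤
      #{e ∈ edgesMeeting G S | ∀ w ∈ e, w ∈ S} + ∑ w ∈ S with w ∈ P, #(exitNeighbors G P S w) := by
  have hsub : {e ∈ edgesMeeting G S | ∀ w ∈ e, w ∈ P} ⊆
      {e ∈ edgesMeeting G S | ∀ w ∈ e, w ∈ S} ∪
        {w ∈ S | w ∈ P}.biUnion fun w => (exitNeighbors G P S w).image fun y => s(w, y) := by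
    intro e he
    obtain ⟨hmeet, heP⟩ := mem_filter.1 he
    obtain ⟨heG, w, hwS, hwe⟩ := mem_edgesMeeting.1 hmeet
    obtain ⟨y, rfl⟩ := Sym2.mem_iff_exists.1 hwe
    obtain ⟨hwP, hyP⟩ := Sym2.ball.1 heP
    by_cases hyS : y ∈ S
    · exact mem_union_left _ (mem_filter.2 ⟨hmeet, Sym2.ball.2 ⟨hwS, hyS⟩⟩)
    · refine mem_union_right _ (mem_biUnion.2 ⟨w, mem_filter.2 ⟨hwS, hwP⟩, mem_image_of_mem _ ?_⟩)
      exact mem_filter.2 ⟨(G.mem_neighborFinset w y).2 heG, hyP, hyS⟩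
  refine (card_le_card hsub).trans ((card_union_le _ _).trans (Nat.add_le_add_left ?_ _))
  exact card_biUnion_le.trans (sum_le_sum fun _ _ => card_image_le)

end EdgeCounting

section EdgeNeighborhood

variable {G : SimpleGraph V} [G.LocallyFinite] {P : Set V} {u v w : V} {d : ℕ}

/-- The neighbours of `u` or `v` other than `u` and `v` themselves, that is, the neighbourhood of an
edge `uv`. -/
noncomputable def edgeNeighborFinset (G : SimpleGraph V) [G.LocallyFinite] (u v : V) :
    Finset V :=
  (G.neighborFinset u ∪ G.neighborFinset v) \ {u, v}

theorem mem_edgeNeighborFinset :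
    w ∈ edgeNeighborFinset G u v ↔ (G.Adj u w ∨ G.Adj v w) ∧ w ≠ u ∧ w ≠ v := by
  simp [edgeNeighborFinset]

theorem edgeNeighborFinset_comm : edgeNeighborFinset G u v = edgeNeighborFinset G v u := by
  rw [edgeNeighborFinset, union_comm, pair_comm, edgeNeighborFinset]

theorem notMem_edgeNeighborFinset :
    w ∉ edgeNeighborFinset G u v ↔ w = u ∨ w = v ∨ w ∈ farVertices G s(u, v) := by
  rw [mem_edgeNeighborFinset, mem_farVertices_mk]
  grind

theorem Conflict.mem_edgesMeeting {f : Sym2 V} (h : Conflict G s(u, v) f) (hf : f ∈ G.edgeSet)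
    (hne : f ≠ s(u, v)) : f ∈ edgesMeeting G (edgeNeighborFinset G u v) := by
  induction f with
  | _ x y =>
  rw [SimpleGraph.mem_edgeSet] at hf
  refine mk_mem_edgesMeeting.2 ⟨hf, ?_⟩
  by_contra! hxy
  have hfar : ¬ (x ∈ farVertices G s(u, v) ∧ y ∈ farVertices G s(u, v)) := fun hfar =>
    not_conflict_iff.2 (Sym2.ball.2 hfar) h
  simp only [notMem_edgeNeighborFinset] at hxy
  simp only [mem_farVertices_mk] at hxy hfar
  have hirrefl := G.irrefl (v := x)
  grind [SimpleGraph.adj_comm]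

theorem card_edgeNeighborFinset_add_card_inter_le (huv : G.Adj u v)
    (hdeg : ∀ w, G.degree w ≤ d) :
    #(edgeNeighborFinset G u v) + #(G.neighborFinset u ∩ G.neighborFinset v) + 2 ≤ 2 * d := by
  have hends : {u, v} ⊆ G.neighborFinset u ∪ G.neighborFinset v :=
    insert_subset (mem_union_right _ ((G.mem_neighborFinset v u).2 huv.symm))
      (singleton_subset_iff.2 (mem_union_left _ ((G.mem_neighborFinset u v).2 huv)))
  have hcard := card_sdiff_add_card_eq_card hends
  rw [card_pair huv.ne] at hcard
  calc _ = #(G.neighborFinset u) + #(G.neighborFinset v) := by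
        rw [edgeNeighborFinset, add_right_comm, hcard, card_union_add_card_inter]
    _ ≤ 2 * d := by
        rw [two_mul]
        exact Nat.add_le_add (hdeg u) (hdeg v)

theorem card_exitNeighbors_le (hw : w ∈ exclusiveNeighbors G P u v) :
    #(exitNeighbors G P (edgeNeighborFinset G u v) w) ≤ 1 + #(outerNeighbors G P s(u, v) w) := by
  have hsub : exitNeighbors G P (edgeNeighborFinset G u v) w ⊆
      insert u (outerNeighbors G P s(u, v) w) := by
    intro y hy
    obtain ⟨hwy, hyP, hyN⟩ := mem_filter.1 hy
    rw [SimpleGraph.mem_neighborFinset] at hwy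
    obtain rfl | rfl | hyfar := notMem_edgeNeighborFinset.1 hyN
    · exact mem_insert_self _ _
    · exact absurd hwy.symm (mem_exclusiveNeighbors.1 hw).2.2.2
    · exact mem_insert_of_mem (mem_outerNeighbors.2 ⟨hwy, hyP, hyfar⟩)
  rw [add_comm]
  exact (card_le_card hsub).trans (card_insert_le _ _)

theorem filter_mem_edgeNeighborFinset_subset : {w ∈ edgeNeighborFinset G u v | w ∈ P} ⊆
    exclusiveNeighbors G P u v ∪ exclusiveNeighbors G P v u ∪
      (G.neighborFinset u ∩ G.neighborFinset v) := by
  intro w hw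
  simp only [mem_filter, mem_edgeNeighborFinset] at hw
  simp only [mem_union, mem_exclusiveNeighbors, mem_inter,
    SimpleGraph.mem_neighborFinset]
  grind

theorem sum_card_exitNeighbors_le (hdeg : ∀ w, G.degree w ≤ d) :
    ∑ w ∈ edgeNeighborFinset G u v with w ∈ P, #(exitNeighbors G P (edgeNeighborFinset G u v) w) ≤
      exitCount G P u v + exitCount G P v u +
        #(G.neighborFinset u ∩ G.neighborFinset v) * d := by
  set N := edgeNeighborFinset G u v with hN
  set A := exclusiveNeighbors G P u v
  set B := exclusiveNeighbors G P v u
  set C := G.neighborFinset u ∩ G.neighborFinset v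
  have hA : ∑ w ∈ A, #(exitNeighbors G P N w) ≤ exitCount G P u v :=
    sum_le_sum fun w hw => card_exitNeighbors_le hw
  have hB : ∑ w ∈ B, #(exitNeighbors G P N w) ≤ exitCount G P v u := by
    rw [hN, edgeNeighborFinset_comm]
    exact sum_le_sum fun w hw => card_exitNeighbors_le hw
  have hC : ∑ w ∈ C, #(exitNeighbors G P N w) ≤ #C * d :=
    sum_le_card_nsmul C _ d fun w _ => (card_le_card (filter_subset _ _)).trans (hdeg w)
  have hAB := sum_union_inter (s₁ := A) (s₂ := B) (f := fun w => #(exitNeighbors G P N w))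
  have hABC := sum_union_inter (s₁ := A ∪ B) (s₂ := C) (f := fun w => #(exitNeighbors G P N w))
  calc _ ≤ ∑ w ∈ A ∪ B ∪ C, #(exitNeighbors G P N w) :=
        sum_le_sum_of_subset filter_mem_edgeNeighborFinset_subset
    _ ≤ _ := by lia

theorem CSet_subset (G : SimpleGraph V) [G.LocallyFinite] (u v : V) : CSet G s(u, v) ⊆
    (insert s(u, v) (edgesMeeting G (edgeNeighborFinset G u v)) : Finset (Sym2 V)) := by
  rintro f ⟨hf, hconf⟩
  obtain rfl | hne := eq_or_ne f s(u, v)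
  · exact mem_coe.2 (mem_insert_self _ _)
  · exact mem_coe.2 (mem_insert_of_mem (hconf.mem_edgesMeeting hf hne))

theorem CSet_finite (G : SimpleGraph V) [G.LocallyFinite] (e : Sym2 V) : (CSet G e).Finite := by
  induction e with
  | _ u v => exact (finite_toSet _).subset (CSet_subset G u v)

theorem ncard_CSet_le (G : SimpleGraph V) [G.LocallyFinite] (u v : V) :
    (CSet G s(u, v)).ncard ≤ #(edgesMeeting G (edgeNeighborFinset G u v)) + 1 :=
  calc (CSet G s(u, v)).ncard
      ≤ #(insert s(u, v) (edgesMeeting G (edgeNeighborFinset G u v))) := by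
        rw [← Set.ncard_coe_finset]
        exact Set.ncard_le_ncard (CSet_subset G u v)
    _ ≤ #(edgesMeeting G (edgeNeighborFinset G u v)) + 1 := card_insert_le _ _

theorem TwoK₂FreeOn.ncard_edgesWithin_le (hP : TwoK₂FreeOn G P)
    (huv : s(u, v) ∈ edgesWithin G P) :
    (edgesWithin G P).ncard ≤
      #{e ∈ edgesMeeting G (edgeNeighborFinset G u v) | ∀ w ∈ e, w ∈ P} + 1 := by
  have hsub : edgesWithin G P ⊆
      (insert s(u, v) {e ∈ edgesMeeting G (edgeNeighborFinset G u v) | ∀ w ∈ e, w ∈ P} :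
        Finset (Sym2 V)) := by
    intro f hf
    obtain rfl | hne := eq_or_ne f s(u, v)
    · exact mem_coe.2 (mem_insert_self _ _)
    · exact mem_coe.2 <| mem_insert_of_mem <|
        mem_filter.2 ⟨(hP _ huv f hf).mem_edgesMeeting hf.1 hne, hf.2⟩
  have hcard := Set.ncard_le_ncard hsub
  rw [Set.ncard_coe_finset] at hcard
  exact hcard.trans (card_insert_le _ _)

theorem TwoK₂FreeOn.four_mul_ncard_add_ncard_le (hP : TwoK₂FreeOn G P) (hC4 : C4Free G)
    (huv : s(u, v) ∈ edgesWithin G P) (hd : 3 ≤ d) (hdeg : ∀ w, G.degree w ≤ d) :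
    4 * ((CSet G s(u, v)).ncard + (edgesWithin G P).ncard) + 4 * d ≤ 9 * d ^ 2 + 4 := by
  set N := edgeNeighborFinset G u v
  have hC := ncard_CSet_le G u v
  have hW := hP.ncard_edgesWithin_le huv
  have hmeet := card_edgesMeeting_add_card_inside_le (G := G) (S := N)
  have hwithin := card_edgesMeeting_within_le (G := G) (S := N) (P := P)
  have hexit := sum_card_exitNeighbors_le (P := P) (u := u) (v := v) hdeg
  have hexits := hP.four_mul_exitCount_add_exitCount_le hC4 huv hd hdeg
  have hsum : ∑ w ∈ N, G.degree w ≤ #N * d := sum_le_card_nsmul N _ d fun w _ => hdeg w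
  have hcard : (#N + #(G.neighborFinset u ∩ G.neighborFinset v) + 2) * d ≤ 2 * d * d :=
    Nat.mul_le_mul_right d (card_edgeNeighborFinset_add_card_inter_le huv.1 hdeg)
  nlinarith

end EdgeNeighborhood

theorem IsMaximalInducedMatching.finite_edgeSet {G : SimpleGraph V} [G.LocallyFinite]
    {M : Set (Sym2 V)} (hM : IsMaximalInducedMatching G M) (hfin : M.Finite) :
    G.edgeSet.Finite := by
  refine (hfin.biUnion fun e _ => CSet_finite G e).subset fun f hf => ?_
  obtain ⟨e, he, hconf⟩ := hM.exists_conflict hf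
  exact Set.mem_biUnion he ⟨hf, hconf⟩

theorem IsMaximalInducedMatching.four_mul_ncard_add_ncard_PCSet_le {G : SimpleGraph V}
    [G.LocallyFinite] {M : Set (Sym2 V)} {d : ℕ} {e : Sym2 V}
    (hM : IsMaximalInducedMatching G M) (hstab : LSStable G M) (hC4 : C4Free G) (hd : 3 ≤ d)
    (hdeg : ∀ w, G.degree w ≤ d) (he : e ∈ M) :
    4 * ((CSet G e).ncard + (PCSet G M e).ncard) + 4 * d ≤ 9 * d ^ 2 + 4 := by
  have hP := hstab.twoK₂FreeOn_privateVertices hM he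
  have heP : e ∈ edgesWithin G (privateVertices G M e) :=
    ⟨hM.1.1 he, fun w => hM.1.mem_privateVertices he⟩
  rw [hM.PCSet_eq_edgesWithin]
  induction e with
  | _ u v => exact hP.four_mul_ncard_add_ncard_le hC4 heP hd hdeg

theorem stmt7_general {G : SimpleGraph V} [G.LocallyFinite] {d : ℕ} (hd : 3 ≤ d)
    (hdeg : ∀ v, G.degree v ≤ d) (hC4 : C4Free G) {M : Set (Sym2 V)} (hfin : M.Finite)
    (hmax : IsMaximalInducedMatching G M) (hstab : LSStable G M) :
    (M.ncard : ℝ) ≥ (G.edgeSet.ncard : ℝ) / ((d : ℝ) ^ 2 + ((d : ℝ) - 2) ^ 2 / 8) := by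
  lift M to Finset (Sym2 V) using hfin
  obtain ⟨E, hE⟩ := (hmax.finite_edgeSet M.finite_toSet).exists_finset_coe
  have hlocal : ∑ e ∈ M, (4 * ((CSet G e).ncard + (PCSet G M e).ncard) + 4 * d) ≤
      #M * (9 * d ^ 2 + 4) :=
    sum_le_card_nsmul M _ _ fun e he =>
      hmax.four_mul_ncard_add_ncard_PCSet_le hstab hC4 hd hdeg he
  rw [sum_add_distrib, ← mul_sum, sum_const, smul_eq_mul] at hlocal
  have hcount : 8 * #E + #M * (4 * d) ≤ #M * (9 * d ^ 2 + 4) := by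
    have htwice := hmax.two_mul_card_le_sum hE
    lia
  have hcount' : (8 * #E + #M * (4 * d) : ℝ) ≤ #M * (9 * d ^ 2 + 4) := mod_cast hcount
  have hpos : 0 < (d : ℝ) ^ 2 + ((d : ℝ) - 2) ^ 2 / 8 :=
    add_pos_of_pos_of_nonneg (pow_pos (Nat.cast_pos.2 (by lia)) 2) (by positivity)
  rw [← hE, Set.ncard_coe_finset, Set.ncard_coe_finset, ge_iff_le, div_le_iff₀ hpos]
  linarith

/-- lower bound for locally optimal induced matchings in `C₄`-free graphs. -/
theorem stmt7 [Fintype V] (G : SimpleGraph V) (d : ℕ) (hd : 3 ≤ d)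
    (hΔ : ∀ v : V, (G.neighborSet v).ncard ≤ d) (hC4 : C4Free G)
    (M : Set (Sym2 V)) (hmax : IsMaximalInducedMatching G M) (hstab : LSStable G M) :
    (M.ncard : ℝ) ≥
      (G.edgeSet.ncard : ℝ) /
        max ((d : ℝ) ^ 2 + (d : ℝ) / 2) ((9 / 8) * (d : ℝ) ^ 2) := by
  have hd' : (3 : ℝ) ≤ d := mod_cast hd
  have hdeg : ∀ v, G.degree v ≤ d := fun v =>
    (Set.ncard_eq_toFinset_card' _).symm.trans_le (hΔ v)
  exact (div_le_div_of_nonneg_left (Nat.cast_nonneg _) (by positivity)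
    (le_max_of_le_right (by nlinarith))).trans
    (stmt7_general hd hdeg hC4 M.toFinite hmax hstab)
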